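/- Let f : Fin 4 → ℝ⁴ be a basis of ℝ⁴ with dual basis f*. For λ > 0 define ê λ 0 = f 0, ê λ 1 = λ^{-1/2} • f 1, ê λ 2 = λ^{-1/2} • ((λ^{-1} + 1) • f 2), ê λ 3 = λ^{-1/2} • (−λ^{-1} • f 2 + f 3). Then: (i) ê λ is a basis of ℝ⁴ for every λ > 0, with dual basis (ê λ)* 0 = f* 0, (ê λ)* 1 = √λ • f* 1, (ê λ)* 2 = √λ • ((λ/(λ+1)) • f* 2 + (1/(λ+1)) • f* 3), (ê λ)* 3 = √λ • f* 3; (ii) Σ_i (ê λ)* i → f* 0 as λ → 0⁺ (condition C1*); (iii) √λ • Σ_i ê λ i → f 1 + f 2 + f 3 as λ → 0⁺ (condition C2*); (iv) the matrix g λ = Σ_i η i * ((ê λ)* i ⊗ (ê λ)* i) converges to f* 0 ⊗ f* 0 as λ → 0⁺, where η 0 = 1 and η 1 = η 2 = η 3 = −1 (metric condition C1); but (v) there is NO matrix h such that λ • Σ_i η i * (ê λ i ⊗ ê λ i) → h as λ → 0⁺, i.e. the rescaled inverse metric fails to converge (metric condition C2 fails). Hence conditions C1* and C2* are strictly weaker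 than the metric convergence conditions C1 and C2. -/

import Mathlib

noncomputable section

open Filter Topology

/-- ℝ⁴, modelled as `Fin 4 → ℝ`. -/
abbrev E4 : Type := Fin 4 → ℝ

/-- `bs` is the dual basis of the basis `b` of ℝ⁴. -/
def IsDualBasis (b bs : Fin 4 → E4) : Prop :=
  ∀ i j : Fin 4, (∑ a, bs i a * b j a) = if i = j then 1 else 0

/-- Outer product `(v ⊗ w) a b = v a * w b`. -/
def outer (v w : E4) : Matrix (Fin 4) (Fin 4) ℝ := fun a b => v a * w b

/-- Minkowski signs: `η 0 = 1`, `η 1 = η 2 = η 3 = −1`. -/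
def eta : Fin 4 → ℝ := fun i => if i = 0 then 1 else -1

/-- the explicit family `ê λ 0 = f 0`, `ê λ 1 = λ^{-1/2} • f 1`,
`ê λ 2 = λ^{-1/2} • ((λ⁻¹ + 1) • f 2)`, `ê λ 3 = λ^{-1/2} • (−λ⁻¹ • f 2 + f 3)`
is a basis with the stated dual basis, satisfies the tetrad conditions C1* and C2* and
the metric condition C1, but its rescaled inverse metric fails to converge (C2 fails):
C1* and C2* are strictly weaker than C1 and C2. -/
theorem stmt7
    (f fs : Fin 4 → E4)
    (hdualf : IsDualBasis f fs)
    (eh ehs : ℝ → Fin 4 → E4)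
    (heh0 : ∀ l : ℝ, eh l 0 = f 0)
    (heh1 : ∀ l : ℝ, eh l 1 = (Real.sqrt l)⁻¹ • f 1)
    (heh2 : ∀ l : ℝ, eh l 2 = (Real.sqrt l)⁻¹ • ((l⁻¹ + 1) • f 2))
    (heh3 : ∀ l : ℝ, eh l 3 = (Real.sqrt l)⁻¹ • ((-l⁻¹) • f 2 + f 3))
    (hehs0 : ∀ l : ℝ, ehs l 0 = fs 0)
    (hehs1 : ∀ l : ℝ, ehs l 1 = Real.sqrt l • fs 1)
    (hehs2 : ∀ l : ℝ, ehs l 2 =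
      Real.sqrt l • ((l / (l + 1)) • fs 2 + (1 / (l + 1)) • fs 3))
    (hehs3 : ∀ l : ℝ, ehs l 3 = Real.sqrt l • fs 3) :
    -- (i) ê λ is a basis with dual basis (ê λ)*
    (∀ l : ℝ, 0 < l → IsDualBasis (eh l) (ehs l)) ∧
    -- (ii) condition C1*
    (Tendsto (fun l : ℝ => ∑ i, ehs l i) (nhdsWithin 0 (Set.Ioi 0)) (nhds (fs 0))) ∧
    -- (iii) condition C2*
    (Tendsto (fun l : ℝ => Real.sqrt l • ∑ i, eh l i) (nhdsWithin 0 (Set.Ioi 0))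
      (nhds (f 1 + f 2 + f 3))) ∧
    -- (iv) metric condition C1
    (Tendsto (fun l : ℝ => ∑ i, eta i • outer (ehs l i) (ehs l i))
      (nhdsWithin 0 (Set.Ioi 0)) (nhds (outer (fs 0) (fs 0)))) ∧
    -- (v) metric condition C2 fails: the rescaled inverse metric does not converge
    (¬ ∃ h : Matrix (Fin 4) (Fin 4) ℝ,
      Tendsto (fun l : ℝ => l • ∑ i, eta i • outer (eh l i) (eh l i))
        (nhdsWithin 0 (Set.Ioi 0)) (nhds h)) := by
  have hs0 : Tendsto (fun l : ℝ => Real.sqrt l) (nhdsWithin 0 (Set.Ioi 0)) (nhds 0) := by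
    have := (Real.continuous_sqrt.tendsto 0).mono_left (nhdsWithin_le_nhds (s := Set.Ioi 0))
    simpa using this
  have hid : Tendsto (fun l : ℝ => l) (nhdsWithin 0 (Set.Ioi 0)) (nhds 0) :=
    nhdsWithin_le_nhds
  have hl1 : Tendsto (fun l : ℝ => l + 1) (nhdsWithin 0 (Set.Ioi 0)) (nhds 1) := by
    simpa using hid.add_const 1
  have hA : Tendsto (fun l : ℝ => l / (l + 1)) (nhdsWithin 0 (Set.Ioi 0)) (nhds 0) := by
    have := hid.div hl1 one_ne_zero
    rw [zero_div] at this
    exact this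
  have hB : Tendsto (fun l : ℝ => 1 / (l + 1)) (nhdsWithin 0 (Set.Ioi 0)) (nhds 1) := by
    have := (tendsto_const_nhds (x := (1 : ℝ))).div hl1 one_ne_zero
    rw [div_one] at this
    exact this
  have t0 : Tendsto (fun l : ℝ => ehs l 0) (nhdsWithin 0 (Set.Ioi 0)) (nhds (fs 0)) := by
    simp only [hehs0]; exact tendsto_const_nhds
  have t1 : Tendsto (fun l : ℝ => ehs l 1) (nhdsWithin 0 (Set.Ioi 0)) (nhds 0) := by
    simp only [hehs1]; simpa using hs0.smul_const (fs 1)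
  have t2 : Tendsto (fun l : ℝ => ehs l 2) (nhdsWithin 0 (Set.Ioi 0)) (nhds 0) := by
    simp only [hehs2]
    simpa using hs0.smul ((hA.smul_const (fs 2)).add (hB.smul_const (fs 3)))
  have t3 : Tendsto (fun l : ℝ => ehs l 3) (nhdsWithin 0 (Set.Ioi 0)) (nhds 0) := by
    simp only [hehs3]; simpa using hs0.smul_const (fs 3)
  have houter : ∀ (u : ℝ → E4) (v : E4), Tendsto u (nhdsWithin 0 (Set.Ioi 0)) (nhds v) →
      Tendsto (fun l => outer (u l) (u l)) (nhdsWithin 0 (Set.Ioi 0)) (nhds (outer v v)) := by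
    intro u v h
    refine tendsto_pi_nhds.2 fun a => tendsto_pi_nhds.2 fun b => ?_
    exact (tendsto_pi_nhds.1 h a).mul (tendsto_pi_nhds.1 h b)
  refine ⟨?_, ?_, ?_, ?_, ?_⟩
  · intro l hl
    have hsp : Real.sqrt l ≠ 0 := (Real.sqrt_pos.2 hl).ne'
    have hl0 : l ≠ 0 := hl.ne'
    have hl1' : l + 1 ≠ 0 := by positivity
    have key : ∀ i j : Fin 4, fs i ⬝ᵥ f j = if i = j then 1 else 0 := hdualf
    intro i j
    change ehs l i ⬝ᵥ eh l j = _
    fin_cases i <;> fin_cases j <;>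
      simp [heh0, heh1, heh2, heh3, hehs0, hehs1, hehs2, hehs3, key] <;>
      field_simp <;> ring
  · simp only [Fin.sum_univ_four]
    simpa using ((t0.add t1).add t2).add t3
  · have h : Tendsto (fun l : ℝ => Real.sqrt l • f 0 + (f 1 + f 2 + f 3))
        (nhdsWithin 0 (Set.Ioi 0)) (nhds (f 1 + f 2 + f 3)) := by
      simpa using (hs0.smul_const (f 0)).add_const (f 1 + f 2 + f 3)
    refine h.congr' ?_
    filter_upwards [self_mem_nhdsWithin] with l hl
    have hsp : Real.sqrt l ≠ 0 := (Real.sqrt_pos.2 hl).ne'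
    simp only [Fin.sum_univ_four, heh0, heh1, heh2, heh3]
    ext a
    simp only [Pi.add_apply, Pi.smul_apply, smul_eq_mul]
    field_simp
    ring
  · have z : outer 0 0 = 0 := by ext a b; simp [outer]
    simp only [Fin.sum_univ_four]
    have := ((((houter _ _ t0).const_smul (eta 0)).add ((houter _ _ t1).const_smul (eta 1))).add
      ((houter _ _ t2).const_smul (eta 2))).add ((houter _ _ t3).const_smul (eta 3))
    simpa [z, eta] using this
  · rintro ⟨h, hh⟩
    have key : ∀ i j : Fin 4, fs i ⬝ᵥ f j = if i = j then 1 else 0 := hdualf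
    have hc : Continuous fun M : Matrix (Fin 4) (Fin 4) ℝ => fs 2 ⬝ᵥ M.mulVec (fs 2) := by
      fun_prop
    have h1 := (hc.tendsto h).comp hh
    have ho : ∀ v : E4, fs 2 ⬝ᵥ (outer v v).mulVec (fs 2) = (fs 2 ⬝ᵥ v) ^ 2 := by
      intro v
      simp only [outer, Matrix.mulVec, dotProduct, Fin.sum_univ_four]
      ring
    have h2 := h1.mul (hid.mul hid)
    have h3 : Tendsto (fun l : ℝ => -((1 + l) ^ 2 + 1)) (nhdsWithin 0 (Set.Ioi 0))
        (nhds (-2)) := by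
      have := (((hid.const_add 1).pow 2).add_const 1).neg
      convert this using 2
      norm_num
    have h4 : Tendsto (fun l : ℝ => -((1 + l) ^ 2 + 1)) (nhdsWithin 0 (Set.Ioi 0))
        (nhds ((fs 2 ⬝ᵥ h.mulVec (fs 2)) * (0 * 0))) := by
      refine h2.congr' ?_
      filter_upwards [self_mem_nhdsWithin] with l hl
      have hsp : Real.sqrt l ≠ 0 := (Real.sqrt_pos.2 hl).ne'
      have hl0 : l ≠ 0 := ne_of_gt hl
      have hq : Real.sqrt l ^ 2 = l := Real.sq_sqrt (le_of_lt hl)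
      simp only [Function.comp, Fin.sum_univ_four, Matrix.smul_mulVec, Matrix.add_mulVec,
        dotProduct_add, dotProduct_smul, ho, heh0, heh1, heh2, heh3, key, smul_eq_mul]
      simp [eta]
      simp only [mul_pow, inv_pow, hq]
      field_simp
      ring
    have := tendsto_nhds_unique h3 h4
    norm_num at this
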